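/- For every N ∈ ℤ≥0 one has the identity G⁻(p−N−1/2)·G⁻(p−N+1/2)···G⁻(p−3/2)·G⁻(p−1/2)·𝟙 = C · Ψ⁻(−N−1/2)Ψ⁻(−N+1/2)···Ψ⁻(−3/2)Ψ⁻(−1/2)𝟙, where C = χ_p^{N+1} if p ≥ 1, and C = χ_0(χ_0+1)···(χ_0+N) if p = 0. -/

import Mathlib

noncomputable section

/-- The fermionic Fock space `F`: it has basis indexed by pairs `(A, B)` of finite sets of
nonnegative integers, the pair `(A, B)` corresponding to the basis monomial
`Ψ⁺(−n₁−1/2)⋯Ψ⁺(−n_r−1/2)·Ψ⁻(−k₁−1/2)⋯Ψ⁻(−k_s−1/2)·𝟙` where `A = {n₁ > ⋯ > n_r}` and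
`B = {k₁ > ⋯ > k_s}`. -/
abbrev FockF : Type := (Finset ℕ × Finset ℕ) →₀ ℂ

/-- The vacuum vector `𝟙`. -/
def vac : FockF := Finsupp.single (∅, ∅) 1

/-- `(−1)^{#{a ∈ S : a > m}}`. -/
def sgn (S : Finset ℕ) (m : ℕ) : ℂ := (-1 : ℂ) ^ (S.filter fun a => m < a).card

/-- `Ψ⁺(−m−1/2)`: exterior multiplication (creation). -/
def psiPneg (m : ℕ) : Module.End ℂ FockF :=
  Finsupp.lsum ℂ fun AB : Finset ℕ × Finset ℕ => LinearMap.toSpanSingleton ℂ FockF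
    (if m ∈ AB.1 then 0 else sgn AB.1 m • Finsupp.single (insert m AB.1, AB.2) 1)

/-- `Ψ⁺(m+1/2)`: the odd contraction operator pairing with `Ψ⁻(−m−1/2)` (annihilation). -/
def psiPpos (m : ℕ) : Module.End ℂ FockF :=
  Finsupp.lsum ℂ fun AB : Finset ℕ × Finset ℕ => LinearMap.toSpanSingleton ℂ FockF
    (if m ∈ AB.2 then ((-1 : ℂ) ^ AB.1.card * sgn AB.2 m) • Finsupp.single (AB.1, AB.2.erase m) 1
     else 0)

/-- `Ψ⁻(−m−1/2)`: exterior multiplication (creation). -/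
def psiMneg (m : ℕ) : Module.End ℂ FockF :=
  Finsupp.lsum ℂ fun AB : Finset ℕ × Finset ℕ => LinearMap.toSpanSingleton ℂ FockF
    (if m ∈ AB.2 then 0
     else ((-1 : ℂ) ^ AB.1.card * sgn AB.2 m) • Finsupp.single (AB.1, insert m AB.2) 1)

/-- `Ψ⁻(m+1/2)`: the odd contraction operator pairing with `Ψ⁺(−m−1/2)` (annihilation). -/
def psiMpos (m : ℕ) : Module.End ℂ FockF :=
  Finsupp.lsum ℂ fun AB : Finset ℕ × Finset ℕ => LinearMap.toSpanSingleton ℂ FockF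
    (if m ∈ AB.1 then sgn AB.1 m • Finsupp.single (AB.1.erase m, AB.2) 1 else 0)

/-- `PsiP i` is the operator `Ψ⁺(i − 1/2)`, `i ∈ ℤ`. -/
def PsiP (i : ℤ) : Module.End ℂ FockF :=
  if i ≤ 0 then psiPneg (-i).toNat else psiPpos (i - 1).toNat

/-- `PsiM i` is the operator `Ψ⁻(i − 1/2)`, `i ∈ ℤ`. -/
def PsiM (i : ℤ) : Module.End ℂ FockF :=
  if i ≤ 0 then psiMneg (-i).toNat else psiMpos (i - 1).toNat

/-- `G⁺(i−1/2) = (λ − i)·Ψ⁺(i−1/2)`. -/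
def Gplus (lam : ℂ) (i : ℤ) : Module.End ℂ FockF := (lam - (i : ℂ)) • PsiP i

/-- The finite set of indices `k ≥ −p` for which `Ψ⁻(k+i−1/2)` can act nontrivially on the
basis monomial `AB`; outside of it all terms of the locally finite sum defining `G⁻` vanish. -/
def GminusIdx (p : ℕ) (i : ℤ) (AB : Finset ℕ × Finset ℕ) : Finset ℤ :=
  (Finset.Icc (-(p : ℤ)) (-i) ∪ AB.1.image fun a : ℕ => (a : ℤ) + 1 - i).filter
    fun k => -(p : ℤ) ≤ k

/-- `G⁻(i−1/2) = −i·Ψ⁻(i−1/2) + Σ_{k=−p}^∞ χ_{−k}·Ψ⁻(k+i−1/2)` (a locally finite sum). -/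
def Gminus (p : ℕ) (χ : ℤ → ℂ) (i : ℤ) : Module.End ℂ FockF :=
  (-(i : ℂ)) • PsiM i +
    Finsupp.lsum ℂ fun AB : Finset ℕ × Finset ℕ => LinearMap.toSpanSingleton ℂ FockF
      (∑ k ∈ GminusIdx p i AB, χ (-k) • PsiM (k + i) (Finsupp.single AB 1))

end

/-- `iterGm p χ N = G⁻(p−N−1/2)·G⁻(p−N+1/2)⋯G⁻(p−3/2)·G⁻(p−1/2)·𝟙`. -/
noncomputable def iterGm (p : ℕ) (χ : ℤ → ℂ) : ℕ → FockF
  | 0 => Gminus p χ p vac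
  | N + 1 => Gminus p χ ((p : ℤ) - (N + 1)) (iterGm p χ N)

/-!
Write `v n` for the basis vector `Ψ⁻(−n+1/2)⋯Ψ⁻(−1/2)𝟙`. Every `Ψ⁻(j−1/2)` with `j > −n` kills
`v n`: for `j ≤ 0` the mode is already occupied, for `j > 0` there is no `Ψ⁺`-mode to contract
with. The mode of smallest index in the series part of `G⁻(p−n−1/2)` is `Ψ⁻(−n−1/2)`, with
coefficient `χ_p`; the remaining summand `−i·Ψ⁻(i−1/2)`, where `i = p − n`, adds `n` to this
coefficient if `p = 0` and kills `v n` if `p ≥ 1`. So `G⁻(p−n−1/2)` maps `v n` to a multiple of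
`v (n+1)`, and the constant `C` is the product of these multiples.
-/

section BasisAction

theorem sgn_eq_one_of_forall_le {S : Finset ℕ} {m : ℕ} (h : ∀ a ∈ S, a ≤ m) : sgn S m = 1 := by
  have hempty : S.filter (fun a => m < a) = ∅ :=
    Finset.filter_eq_empty_iff.mpr fun a ha => (h a ha).not_gt
  rw [sgn, hempty, Finset.card_empty, pow_zero]

theorem PsiM_neg_natCast (m : ℕ) : PsiM (-(m : ℤ)) = psiMneg m := by
  simp [PsiM]

theorem PsiM_natCast_add_one (m : ℕ) : PsiM ((m : ℤ) + 1) = psiMpos m := by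
  have hpos : ¬ (m : ℤ) + 1 ≤ 0 := by lia
  simp [PsiM, hpos]

variable {m : ℕ} {A B : Finset ℕ}

theorem psiMneg_single_of_mem (h : m ∈ B) : psiMneg m (Finsupp.single (A, B) 1) = 0 := by
  simp [psiMneg, h]

theorem psiMneg_single_of_notMem (h : m ∉ B) :
    psiMneg m (Finsupp.single (A, B) 1) =
      ((-1 : ℂ) ^ A.card * sgn B m) • Finsupp.single (A, insert m B) 1 := by
  simp [psiMneg, h]

theorem psiMpos_single_of_notMem (h : m ∉ A) : psiMpos m (Finsupp.single (A, B) 1) = 0 := by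
  simp [psiMpos, h]

end BasisAction

section Gminus

variable {p : ℕ} {i : ℤ}

theorem PsiM_single_eq_zero_of_notMem_GminusIdx {AB : Finset ℕ × Finset ℕ} {k : ℤ}
    (hpk : -(p : ℤ) ≤ k) (hk : k ∉ GminusIdx p i AB) :
    PsiM (k + i) (Finsupp.single AB 1) = 0 := by
  simp only [GminusIdx, Finset.mem_filter, Finset.mem_union, Finset.mem_Icc, Finset.mem_image,
    hpk, true_and, and_true, not_or, not_exists, not_and] at hk
  obtain ⟨hki, hA⟩ := hk
  obtain ⟨m, hm⟩ := Int.eq_ofNat_of_zero_le (show 0 ≤ k + i - 1 by lia)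
  have hmA : m ∉ AB.1 := fun h => hA m h (by lia)
  rw [show k + i = m + 1 by lia, PsiM_natCast_add_one, psiMpos_single_of_notMem hmA]

theorem Gminus_single (χ : ℤ → ℂ) (AB : Finset ℕ × Finset ℕ) :
    Gminus p χ i (Finsupp.single AB 1) =
      -(i : ℂ) • PsiM i (Finsupp.single AB 1) +
        ∑ k ∈ GminusIdx p i AB, χ (-k) • PsiM (k + i) (Finsupp.single AB 1) := by
  simp [Gminus]

theorem Gminus_single_of_PsiM_eq_zero (χ : ℤ → ℂ) {AB : Finset ℕ × Finset ℕ}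
    (h : ∀ j, i - p < j → PsiM j (Finsupp.single AB 1) = 0) :
    Gminus p χ i (Finsupp.single AB 1) =
      -(i : ℂ) • PsiM i (Finsupp.single AB 1) + χ p • PsiM (i - p) (Finsupp.single AB 1) := by
  rw [Gminus_single, Finset.sum_eq_single (-(p : ℤ)), neg_neg, neg_add_eq_sub]
  · intro k hk hkp
    have hpk : -(p : ℤ) ≤ k := (Finset.mem_filter.mp hk).2
    rw [h (k + i) (by lia), smul_zero]
  · intro hp
    rw [PsiM_single_eq_zero_of_notMem_GminusIdx le_rfl hp, smul_zero]

end Gminus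

section FilledState

/-- The vector `Ψ⁻(−n+1/2)⋯Ψ⁻(−3/2)Ψ⁻(−1/2)𝟙`, in which exactly the first `n` creation modes
of `Ψ⁻` are occupied; the index counts modes, so that `Ψ⁻(−N−1/2)⋯Ψ⁻(−1/2)𝟙` is
`filledState (N + 1)`. -/
noncomputable def filledState (n : ℕ) : FockF := Finsupp.single (∅, Finset.range n) 1

theorem filledState_zero : filledState 0 = vac := rfl

theorem PsiM_filledState_eq_zero {n : ℕ} {j : ℤ} (hj : -(n : ℤ) < j) :
    PsiM j (filledState n) = 0 := by
  rcases le_or_gt j 0 with hj0 | hj0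
  · obtain ⟨m, rfl⟩ := Int.exists_eq_neg_ofNat hj0
    have hm : m ∈ Finset.range n := Finset.mem_range.mpr (by lia)
    rw [PsiM_neg_natCast, filledState, psiMneg_single_of_mem hm]
  · obtain ⟨m, rfl⟩ : ∃ m : ℕ, j = m + 1 := Int.eq_succ_of_zero_lt hj0
    rw [PsiM_natCast_add_one, filledState, psiMpos_single_of_notMem (Finset.notMem_empty m)]

theorem PsiM_neg_filledState (n : ℕ) : PsiM (-(n : ℤ)) (filledState n) = filledState (n + 1) := by
  have hsgn : sgn (Finset.range n) n = 1 :=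
    sgn_eq_one_of_forall_le fun _ ha => (Finset.mem_range.mp ha).le
  rw [PsiM_neg_natCast, filledState, psiMneg_single_of_notMem Finset.notMem_range_self, hsgn,
    Finset.card_empty, pow_zero, one_mul, one_smul, ← Finset.range_add_one, filledState]

/-- The scalar by which `G⁻(p−n−1/2)` carries `filledState n` to `filledState (n + 1)`. -/
def raisingCoeff (p : ℕ) (χ : ℤ → ℂ) (n : ℕ) : ℂ := if p = 0 then χ 0 + n else χ p

theorem Gminus_filledState (p : ℕ) (χ : ℤ → ℂ) (n : ℕ) :
    Gminus p χ ((p : ℤ) - n) (filledState n) = raisingCoeff p χ n • filledState (n + 1) := by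
  have hlowest : Gminus p χ ((p : ℤ) - n) (filledState n) =
      -(((p : ℤ) - n : ℤ) : ℂ) • PsiM ((p : ℤ) - n) (filledState n) +
        χ p • filledState (n + 1) := by
    rw [← PsiM_neg_filledState, ← sub_sub_cancel_left (p : ℤ) n]
    exact Gminus_single_of_PsiM_eq_zero χ fun j hj => PsiM_filledState_eq_zero (by lia)
  rw [hlowest, raisingCoeff]
  split_ifs with hp
  · subst hp
    rw [Nat.cast_zero, zero_sub, PsiM_neg_filledState, ← add_smul]
    push_cast
    rw [neg_neg, add_comm]
  · rw [PsiM_filledState_eq_zero (by lia), smul_zero, zero_add]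

theorem iterGm_eq_prod_raisingCoeff_smul (p : ℕ) (χ : ℤ → ℂ) (N : ℕ) :
    iterGm p χ N = (∏ n ∈ Finset.range (N + 1), raisingCoeff p χ n) • filledState (N + 1) := by
  induction N with
  | zero => simpa [iterGm, filledState_zero] using Gminus_filledState p χ 0
  | succ N ih =>
    rw [iterGm, ih, map_smul, ← Nat.cast_add_one, Gminus_filledState, smul_smul,
      ← Finset.prod_range_succ]

end FilledState

/-- For every `N ∈ ℤ≥0`,
`G⁻(p−N−1/2)⋯G⁻(p−3/2)·G⁻(p−1/2)·𝟙 = C · Ψ⁻(−N−1/2)⋯Ψ⁻(−3/2)Ψ⁻(−1/2)·𝟙`, where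
`C = χ_p^{N+1}` if `p ≥ 1`, and `C = χ_0(χ_0+1)⋯(χ_0+N)` if `p = 0`.  (The monomial
`Ψ⁻(−N−1/2)⋯Ψ⁻(−1/2)·𝟙` is the basis vector indexed by `(∅, {0,…,N})`.) -/
theorem statement2 (p : ℕ) (χ : ℤ → ℂ) (hχtop : ∀ j : ℤ, (p : ℤ) < j → χ j = 0) (N : ℕ) :
    iterGm p χ N =
      (if p = 0 then ∏ j ∈ Finset.range (N + 1), (χ 0 + (j : ℂ)) else χ p ^ (N + 1)) •
        Finsupp.single (∅, Finset.range (N + 1)) 1 := by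
  rw [iterGm_eq_prod_raisingCoeff_smul, filledState]
  congr 1
  split_ifs with hp <;> simp [raisingCoeff, hp]
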